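/- Let G = (V,E) be a finite simple graph with |V| = n ≥ 2 and let y: V → ℝ be a mapping such that ∑_{(i,j)∈V×V} |y(i) − y(j)| > 0 and n·∑_{{i,j}∈E} |y(i) − y(j)| ≤ δ₀·∑_{(i,j)∈V×V} |y(i) − y(j)|, where the first sum is over the edges of G and the double sum ranges over all ordered pairs of vertices. Then there exists a threshold t ∈ ℝ such that the set W = {i ∈ V : y(i) ≤ t} satisfies ∅ ⊊ W ⊊ V and φ(W) ≤ 2·δ₀. -/

import Mathlib

open Finset
open scoped Classical

noncomputable section

variable {V : Type*}

/-- The degree of vertex `v` in the graph `H`. -/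
def hdeg [Fintype V] (H : SimpleGraph V) (v : V) : ℕ :=
  (Finset.univ.filter fun w => H.Adj v w).card

/-- `H` has spectral gap at least `lam`: for every `X : V → ℝ` with
`∑ v, deg v * X v = 0`, the sum over edges of `(X i - X j)^2` (written as half the
sum over ordered adjacent pairs) is at least `lam * ∑ v, deg v * (X v)^2`. -/
def HasGap [Fintype V] (H : SimpleGraph V) (lam : ℝ) : Prop :=
  ∀ X : V → ℝ, ∑ v, (hdeg H v : ℝ) * X v = 0 →
    (1 / 2) * ∑ i, ∑ j, (if H.Adj i j then (X i - X j) ^ 2 else 0) ≥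
      lam * ∑ v, (hdeg H v : ℝ) * X v ^ 2

/-- The number of edges of `G` with exactly one endpoint in `S`. -/
def edgeCut [Fintype V] (G : SimpleGraph V) (S : Finset V) : ℕ :=
  ((Finset.univ : Finset (V × V)).filter fun p => p.1 ∈ S ∧ p.2 ∉ S ∧ G.Adj p.1 p.2).card

/-- Edge expansion `φ(S) = |E(S, V∖S)| * n / (|S| * |V∖S|)`. -/
def edgeExp [Fintype V] [DecidableEq V] (G : SimpleGraph V) (S : Finset V) : ℝ :=
  (edgeCut G S : ℝ) * (Fintype.card V : ℝ) / ((S.card : ℝ) * ((Sᶜ : Finset V).card : ℝ))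

/-
Call the cut weight of a set the total weight of the pairs leaving it. A pair `(i, j)` leaves
`{i : y i ≤ t}` exactly when `t ∈ [y i, y j)`, so integrating the cut weight over `t` turns a
symmetric weight `w` into `½ ∑ w i j |y i - y j|`. Apply this to `w = n · 1_E - 2 δ₀`, for which a
nontrivial `S` has nonpositive cut weight iff `φ(S) ≤ 2 δ₀`: the hypothesis says that the integral
is nonpositive. Since trivial cuts have weight `0`, the average over the thresholds with a
nontrivial cut is also nonpositive, and some threshold does at least as well as the average.
-/

open MeasureTheory

theorem integrable_indicator_Ico_const (a b c : ℝ) :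
    Integrable ((Set.Ico a b).indicator fun _ => c) :=
  (integrableOn_const measure_Ico_lt_top.ne).integrable_indicator measurableSet_Ico

theorem integral_indicator_Ico_const (a b c : ℝ) :
    ∫ t, (Set.Ico a b).indicator (fun _ => c) t = c * (b - a)⁺ := by
  rw [integral_indicator_const _ measurableSet_Ico, measureReal_def, Real.volume_Ico,
    ENNReal.toReal_ofReal', smul_eq_mul, mul_comm, posPart_def]

section CutWeight

variable [Fintype V]

/-- The sublevel set `{i : y i ≤ t}` as a finset: the cut of the vertices at threshold `t`.
It is reducible so that it unifies with the filter it stands for. -/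
abbrev thresholdSet (y : V → ℝ) (t : ℝ) : Finset V :=
  univ.filter fun i => y i ≤ t

variable [DecidableEq V]

/-- The weight of the directed cut `(S, Sᶜ)`: the total weight `w i j` of the ordered pairs with
`i ∈ S` and `j ∉ S`. Weights may be negative. -/
def cutWeight (w : V → V → ℝ) (S : Finset V) : ℝ :=
  ∑ i ∈ S, ∑ j ∈ Sᶜ, w i j

@[simp]
theorem cutWeight_empty (w : V → V → ℝ) : cutWeight w ∅ = 0 := by
  simp [cutWeight]

@[simp]
theorem cutWeight_univ (w : V → V → ℝ) : cutWeight w univ = 0 := by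
  simp [cutWeight]

theorem cutWeight_thresholdSet (w : V → V → ℝ) (y : V → ℝ) (t : ℝ) :
    cutWeight w (thresholdSet y t) =
      ∑ i, ∑ j, (Set.Ico (y i) (y j)).indicator (fun _ => w i j) t := by
  simp only [cutWeight, compl_filter, not_le, sum_filter, Set.indicator_apply, Set.mem_Ico,
    ite_and, sum_ite_irrel, sum_const_zero]

theorem cutWeight_thresholdSet_eq_zero (w : V → V → ℝ) {y : V → ℝ} {a b : V}
    (ha : ∀ k, y a ≤ y k) (hb : ∀ k, y k ≤ y b) {t : ℝ} (ht : t ∉ Set.Ico (y a) (y b)) :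
    cutWeight w (thresholdSet y t) = 0 := by
  rcases lt_or_ge t (y a) with hta | hat
  · have : thresholdSet y t = ∅ := filter_false_of_mem fun k _ => (hta.trans_le (ha k)).not_ge
    rw [this, cutWeight_empty]
  · have hbt : y b ≤ t := not_lt.1 fun htb => ht ⟨hat, htb⟩
    have : thresholdSet y t = univ := filter_true_of_mem fun k _ => (hb k).trans hbt
    rw [this, cutWeight_univ]

theorem integrable_cutWeight_thresholdSet (w : V → V → ℝ) (y : V → ℝ) :
    Integrable fun t => cutWeight w (thresholdSet y t) := by
  simp only [cutWeight_thresholdSet]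
  exact integrable_finsetSum _ fun i _ => integrable_finsetSum _ fun j _ =>
    integrable_indicator_Ico_const _ _ _

theorem integral_cutWeight_thresholdSet (w : V → V → ℝ) (y : V → ℝ) :
    ∫ t, cutWeight w (thresholdSet y t) = ∑ i, ∑ j, w i j * (y j - y i)⁺ := by
  have hint (i j : V) := integrable_indicator_Ico_const (y i) (y j) (w i j)
  simp only [cutWeight_thresholdSet]
  rw [integral_finsetSum _ fun i _ => integrable_finsetSum _ fun j _ => hint i j]
  refine sum_congr rfl fun i _ => ?_
  rw [integral_finsetSum _ fun j _ => hint i j]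
  exact sum_congr rfl fun j _ => integral_indicator_Ico_const _ _ _

theorem exists_thresholdSet_cutWeight_nonpos {w : V → V → ℝ} {y : V → ℝ}
    (hy : ∃ i j, y i < y j) (hw : ∑ i, ∑ j, w i j * (y j - y i)⁺ ≤ 0) :
    ∃ t, (thresholdSet y t).Nonempty ∧ thresholdSet y t ≠ univ ∧
      cutWeight w (thresholdSet y t) ≤ 0 := by
  obtain ⟨i, j, hij⟩ := hy
  have : Nonempty V := ⟨i⟩
  obtain ⟨a, ha⟩ := Finite.exists_min y
  obtain ⟨b, hb⟩ := Finite.exists_max y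
  have hab : y a < y b := (ha i).trans_lt (hij.trans_le (hb j))
  have average_nonpos : ⨍ t in Set.Ico (y a) (y b), cutWeight w (thresholdSet y t) ≤ 0 := by
    rw [setAverage_eq, setIntegral_eq_integral_of_forall_compl_eq_zero
        fun t => cutWeight_thresholdSet_eq_zero w ha hb,
      integral_cutWeight_thresholdSet]
    exact smul_nonpos_of_nonneg_of_nonpos (inv_nonneg.2 measureReal_nonneg) hw
  obtain ⟨t, ⟨hat, htb⟩, ht⟩ := exists_le_setAverage (by simpa using hab)
    measure_Ico_lt_top.ne (integrable_cutWeight_thresholdSet w y).integrableOn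
  exact ⟨t, ⟨a, by simpa using hat⟩, fun h => htb.not_ge (filter_eq_self.1 h b (mem_univ b)),
    ht.trans average_nonpos⟩

end CutWeight

section Symmetrization

variable [Fintype V]

theorem exists_lt_of_sum_abs_sub_pos {y : V → ℝ} (h : 0 < ∑ i, ∑ j, |y i - y j|) :
    ∃ i j, y i < y j := by
  contrapose! h
  refine sum_nonpos fun i _ => sum_nonpos fun j _ => ?_
  rw [le_antisymm (h j i) (h i j), sub_self, abs_zero]

theorem sum_mul_posPart_sub_of_symm {w : V → V → ℝ} (hw : ∀ i j, w i j = w j i) (y : V → ℝ) :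
    ∑ i, ∑ j, w i j * (y j - y i)⁺ = (1 / 2) * ∑ i, ∑ j, w i j * |y i - y j| := by
  have posPart_eq_negPart : ∑ i, ∑ j, w i j * (y j - y i)⁺ = ∑ i, ∑ j, w i j * (y j - y i)⁻ := by
    rw [sum_comm]
    refine sum_congr rfl fun i _ => sum_congr rfl fun j _ => ?_
    rw [hw j i, ← neg_sub (y j), posPart_neg]
  have add_eq_abs : ∑ i, ∑ j, w i j * (y j - y i)⁺ + ∑ i, ∑ j, w i j * (y j - y i)⁻ =
      ∑ i, ∑ j, w i j * |y i - y j| := by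
    simp only [← sum_add_distrib, ← mul_add, posPart_add_negPart, abs_sub_comm]
  linarith

end Symmetrization

section Expansion

variable [Fintype V]

/-- The pair weight `n · 1_E - c`, which encodes edge expansion in a cut weight: among the
nontrivial sets, the cut weight is nonpositive exactly on those of expansion at most `c`. -/
def expansionWeight (G : SimpleGraph V) (c : ℝ) (i j : V) : ℝ :=
  Fintype.card V * (if G.Adj i j then 1 else 0) - c

theorem expansionWeight_comm (G : SimpleGraph V) (c : ℝ) (i j : V) :
    expansionWeight G c i j = expansionWeight G c j i := by
  simp only [expansionWeight, G.adj_comm]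

theorem sum_expansionWeight_mul (G : SimpleGraph V) (c : ℝ) (f : V → V → ℝ) :
    ∑ i, ∑ j, expansionWeight G c i j * f i j =
      Fintype.card V * (∑ i, ∑ j, if G.Adj i j then f i j else 0) - c * ∑ i, ∑ j, f i j := by
  simp only [expansionWeight, sub_mul, mul_assoc, ite_mul, one_mul, zero_mul, sum_sub_distrib,
    mul_sum]

variable [DecidableEq V]

theorem edgeCut_eq_sum (G : SimpleGraph V) (S : Finset V) :
    (edgeCut G S : ℝ) = ∑ i ∈ S, ∑ j ∈ Sᶜ, if G.Adj i j then 1 else 0 := by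
  rw [← sum_product', sum_boole, edgeCut, Nat.cast_inj]
  congr 1
  ext p
  simp [and_assoc]

theorem cutWeight_expansionWeight (G : SimpleGraph V) (c : ℝ) (S : Finset V) :
    cutWeight (expansionWeight G c) S =
      edgeCut G S * Fintype.card V - c * (#S * #Sᶜ) := by
  simp only [cutWeight, expansionWeight, sum_sub_distrib, ← mul_sum, ← edgeCut_eq_sum, sum_const,
    nsmul_eq_mul]
  ring

theorem edgeExp_le_iff_cutWeight_nonpos (G : SimpleGraph V) {S : Finset V} (hS : S.Nonempty)
    (hS' : S ≠ univ) (c : ℝ) :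
    edgeExp G S ≤ c ↔ cutWeight (expansionWeight G c) S ≤ 0 := by
  have hpos : (0 : ℝ) < #S * #Sᶜ := by
    have hSc : Sᶜ.Nonempty := nonempty_iff_ne_empty.2 (mt (compl_eq_empty_iff S).1 hS')
    exact_mod_cast mul_pos hS.card_pos hSc.card_pos
  rw [cutWeight_expansionWeight, edgeExp, div_le_iff₀ hpos, sub_nonpos]

end Expansion

/-- **Lemma (ℓ₁-line embedding, edge expansion).**
If `y : V → ℝ` satisfies `n · ∑_{{i,j} ∈ E} |y i - y j| ≤ δ₀ · ∑_{(i,j)} |y i - y j|`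
with the denominator positive, then some threshold set `W = {i : y i ≤ t}` is a
nontrivial cut with `φ(W) ≤ 2 δ₀`. (The sum over edges is written as half the sum over
ordered adjacent pairs.) -/
theorem line_embedding_edge {V : Type*} [Fintype V] [DecidableEq V] (G : SimpleGraph V)
    (hn : 2 ≤ Fintype.card V) (y : V → ℝ) (δ₀ : ℝ)
    (hpos : 0 < ∑ i, ∑ j, |y i - y j|)
    (hbound : (Fintype.card V : ℝ) *
        ((1 / 2) * ∑ i, ∑ j, (if G.Adj i j then |y i - y j| else 0)) ≤
      δ₀ * ∑ i, ∑ j, |y i - y j|) :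
    ∃ t : ℝ, (Finset.univ.filter fun i => y i ≤ t).Nonempty ∧
      (Finset.univ.filter fun i => y i ≤ t) ≠ Finset.univ ∧
      edgeExp G (Finset.univ.filter fun i => y i ≤ t) ≤ 2 * δ₀ := by
  have energy_nonpos :
      ∑ i, ∑ j, expansionWeight G (2 * δ₀) i j * (y j - y i)⁺ ≤ 0 := by
    rw [sum_mul_posPart_sub_of_symm (expansionWeight_comm G _), sum_expansionWeight_mul]
    linarith
  obtain ⟨t, hne, hne_univ, hcut⟩ := exists_thresholdSet_cutWeight_nonpos
    (exists_lt_of_sum_abs_sub_pos hpos) energy_nonpos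
  exact ⟨t, hne, hne_univ, (edgeExp_le_iff_cutWeight_nonpos G hne hne_univ _).2 hcut⟩
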